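/- arXiv:1708.04403 — 5 statements merged into one kernel-verified Lean document; each statement's English description precedes it below -/
import Mathlib

section
/- Let μ be a probability measure on a measurable space X, let c : X → {−1,+1} be a measurable target concept, and let H be a finite set of measurable hypotheses h : X → {−1,+1} with c ∈ H. Fix integers l ≥ 1, u ≥ 1, i ≥ 0 and fixed measurable pseudo-labelers g₀, …, g_{i−1} : X → {−1,+1}. Draw l + i·u points independently from μ, indexed by Fin l ⊕ (Fin i × Fin u) (product measure); assign to each of the first l points the label given by c, and to each point in the k-th block of u points the label given by g_k. For h ∈ H let N(h) denote the number of sample points on which h disagrees with its assigned label. Suppose ε ∈ (0,1), δ ∈ (0,1) and l ≥ (2/ε²)·ln(2·|H|/δ). Then, with probability at least 1 − δ over the draw of the sample, every h ∈ H that minimizes N over H satisfies err(h) ≤ (ε·√(l² + i·u·l) − u·Σ_{k<i} (d(h,g_k) − err(g_k))) / l. -/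
open MeasureTheory

/-! For a hypothesis `h` and labelers `y t`, the excess `∑ t, (d(h, y t) - d(c, y t))` is the mean
of `N(h) - N(c)`, a sum of `n` independent variables with values in `[-1, 1]`. If it is at least
`s`, then by Hoeffding's inequality `N(h) ≤ N(c)`, which holds when `h` minimizes `N`, has
probability at most `exp (-s² / 2n)`. For `n = l + iu` the excess is
`l err(h) + u ∑ k, (d(h, g k) - err(g k))`, and `s = ε √(l n)` makes the exponent `-ε² l / 2`; a
union bound over `H` concludes. -/

section Hoeffding

open ProbabilityTheory

variable {ι : Type*} [Fintype ι] {X : ι → Type*} [∀ t, MeasurableSpace (X t)]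
  {μ : ∀ t, Measure (X t)} [∀ t, IsProbabilityMeasure (μ t)] {a b : ι → ℝ} {s : ℝ}

lemma measureReal_pi_le_sum_sub_integral_le {f : ∀ t, X t → ℝ}
    (hf : ∀ t, AEMeasurable (f t) (μ t)) (hfab : ∀ t, ∀ᵐ x ∂μ t, f t x ∈ Set.Icc (a t) (b t))
    (hs : 0 ≤ s) :
    (Measure.pi μ).real {ω | s ≤ ∑ t, (f t (ω t) - ∫ x, f t x ∂μ t)} ≤
      Real.exp (-2 * s ^ 2 / ∑ t, (b t - a t) ^ 2) := by
  have hindep : iIndepFun (fun t ω ↦ f t (ω t) - ∫ x, f t x ∂μ t) (Measure.pi μ) :=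
    iIndepFun_pi (X := fun t x ↦ f t x - ∫ x, f t x ∂μ t) fun t ↦ (hf t).sub_const _
  have hsubG : ∀ t ∈ Finset.univ, HasSubgaussianMGF (fun ω ↦ f t (ω t) - ∫ x, f t x ∂μ t)
      ((‖b t - a t‖₊ / 2) ^ 2) (Measure.pi μ) := fun t _ ↦ by
    have hmp := measurePreserving_eval μ t
    refine HasSubgaussianMGF.of_map (X := fun x ↦ f t x - ∫ x, f t x ∂μ t) hmp.aemeasurable ?_
    rw [hmp.map_eq]
    exact hasSubgaussianMGF_of_mem_Icc (hf t) (hfab t)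
  refine (HasSubgaussianMGF.measure_sum_ge_le_of_iIndepFun hindep hsubG hs).trans_eq ?_
  have hcoeff : ((∑ t, (‖b t - a t‖₊ / 2) ^ 2 : NNReal) : ℝ) = (∑ t, (b t - a t) ^ 2) / 4 := by
    push_cast
    rw [Finset.sum_div]
    refine Finset.sum_congr rfl fun t _ ↦ ?_
    rw [div_pow, Real.norm_eq_abs, sq_abs]
    norm_num
  rw [hcoeff]
  congr 1
  ring

lemma measureReal_pi_sum_le_sum_and_le_le {f g : ∀ t, X t → ℝ}
    (hf : ∀ t, AEMeasurable (f t) (μ t)) (hfab : ∀ t, ∀ᵐ x ∂μ t, f t x ∈ Set.Icc (a t) (b t))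
    (hg : ∀ t, AEMeasurable (g t) (μ t)) (hgab : ∀ t, ∀ᵐ x ∂μ t, g t x ∈ Set.Icc (a t) (b t))
    (hs : 0 ≤ s) :
    (Measure.pi μ).real {ω | ∑ t, f t (ω t) ≤ ∑ t, g t (ω t) ∧
        s ≤ ∑ t, (∫ x, f t x ∂μ t - ∫ x, g t x ∂μ t)} ≤
      Real.exp (-s ^ 2 / (2 * ∑ t, (b t - a t) ^ 2)) := by
  have hmem : ∀ t, ∀ᵐ x ∂μ t, g t x - f t x ∈ Set.Icc (a t - b t) (b t - a t) := fun t ↦ by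
    filter_upwards [hfab t, hgab t] with x hfx hgx
    exact ⟨sub_le_sub hgx.1 hfx.2, sub_le_sub hgx.2 hfx.1⟩
  have hint : ∀ t, ∫ x, (g t x - f t x) ∂μ t = ∫ x, g t x ∂μ t - ∫ x, f t x ∂μ t := fun t ↦
    integral_sub (.of_mem_Icc _ _ (hg t) (hgab t)) (.of_mem_Icc _ _ (hf t) (hfab t))
  calc
    _ ≤ (Measure.pi μ).real
          {ω | s ≤ ∑ t, (g t (ω t) - f t (ω t) - ∫ x, (g t x - f t x) ∂μ t)} := by
      refine measureReal_mono ?_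
      rintro ω ⟨hle, hexcess⟩
      simp only [Set.mem_ofPred_eq, hint, Finset.sum_sub_distrib] at hexcess ⊢
      linarith
    _ ≤ Real.exp (-2 * s ^ 2 / ∑ t, (b t - a t - (a t - b t)) ^ 2) :=
      measureReal_pi_le_sum_sub_integral_le (fun t ↦ (hg t).sub (hf t)) hmem hs
    _ = Real.exp (-s ^ 2 / (2 * ∑ t, (b t - a t) ^ 2)) := by
      have hwidth : ∑ t, (b t - a t - (a t - b t)) ^ 2 = 4 * ∑ t, (b t - a t) ^ 2 := by
        rw [Finset.mul_sum]
        exact Finset.sum_congr rfl fun t _ ↦ by ring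
      rw [hwidth]
      congr 1
      ring

lemma one_sub_card_mul_exp_le_measureReal_pi_forall_le {α : Type*} (H : Finset α)
    {f : α → ∀ t, X t → ℝ} {g : ∀ t, X t → ℝ}
    (hf : ∀ h ∈ H, ∀ t, AEMeasurable (f h t) (μ t))
    (hfab : ∀ h ∈ H, ∀ t, ∀ᵐ x ∂μ t, f h t x ∈ Set.Icc (a t) (b t))
    (hg : ∀ t, AEMeasurable (g t) (μ t)) (hgab : ∀ t, ∀ᵐ x ∂μ t, g t x ∈ Set.Icc (a t) (b t))
    (hs : 0 ≤ s) :
    1 - H.card * Real.exp (-s ^ 2 / (2 * ∑ t, (b t - a t) ^ 2)) ≤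
      (Measure.pi μ).real {ω | ∀ h ∈ H, ∑ t, f h t (ω t) ≤ ∑ t, g t (ω t) →
        ∑ t, (∫ x, f h t x ∂μ t - ∫ x, g t x ∂μ t) ≤ s} := by
  set good : Set (∀ t, X t) := {ω | ∀ h ∈ H, ∑ t, f h t (ω t) ≤ ∑ t, g t (ω t) →
    ∑ t, (∫ x, f h t x ∂μ t - ∫ x, g t x ∂μ t) ≤ s}
  let bad (h : α) : Set (∀ t, X t) := {ω | ∑ t, f h t (ω t) ≤ ∑ t, g t (ω t) ∧
    s ≤ ∑ t, (∫ x, f h t x ∂μ t - ∫ x, g t x ∂μ t)}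
  have hcover : good ∪ ⋃ h ∈ H, bad h = Set.univ := by
    refine Set.eq_univ_of_forall fun ω ↦ or_iff_not_imp_right.2 fun hω h hh hle ↦ ?_
    by_contra! hlt
    exact hω (Set.mem_biUnion hh ⟨hle, hlt.le⟩)
  have hbad : (Measure.pi μ).real (⋃ h ∈ H, bad h) ≤
      H.card * Real.exp (-s ^ 2 / (2 * ∑ t, (b t - a t) ^ 2)) := by
    rw [← nsmul_eq_mul]
    exact (measureReal_biUnion_finset_le H bad).trans <| Finset.sum_le_card_nsmul _ _ _ fun h hh ↦
      measureReal_pi_sum_le_sum_and_le_le (hf h hh) (hfab h hh) hg hgab hs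
  have hunion := measureReal_union_le (μ := Measure.pi μ) good (⋃ h ∈ H, bad h)
  rw [hcover, probReal_univ] at hunion
  linarith

end Hoeffding

section Classification

variable {X Y ι : Type*} [Fintype ι]

/-- The number `N(h)` of points of the sample `ω` on which `h` disagrees with the assigned label,
where the `t`-th point is labeled by the classifier `y t`. -/
def numErrors [DecidableEq Y] (y : ι → X → Y) (ω : ι → X) (h : X → Y) : ℕ :=
  (Finset.univ.filter fun t ↦ h (ω t) ≠ y t (ω t)).card

lemma sum_indicator_ne_one [DecidableEq Y] (y : ι → X → Y) (ω : ι → X) (h : X → Y) :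
    ∑ t, {x | h x ≠ y t x}.indicator (1 : X → ℝ) (ω t) = numErrors y ω h := by
  simp [numErrors, Finset.card_filter, Set.indicator]

variable [MeasurableSpace X]

/-- The disagreement `d(f, g)` of two classifiers under `μ`; the error rate `err(h)` is
`disagreement μ h c`. -/
noncomputable def disagreement (μ : Measure X) (f g : X → Y) : ℝ := μ.real {x | f x ≠ g x}

@[simp]
lemma disagreement_self (μ : Measure X) (f : X → Y) : disagreement μ f f = 0 := by
  simp [disagreement]

lemma disagreement_comm (μ : Measure X) (f g : X → Y) :
    disagreement μ f g = disagreement μ g f := by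
  simp only [disagreement, ne_comm]

lemma nullMeasurableSet_ne_fun [MeasurableSpace Y] [MeasurableEq Y] {μ : Measure X} {f g : X → Y}
    (hf : AEMeasurable f μ) (hg : AEMeasurable g μ) : NullMeasurableSet {x | f x ≠ g x} μ :=
  (nullMeasurableSet_eq_fun hf hg).compl

lemma integral_indicator_ne_one [MeasurableSpace Y] [MeasurableEq Y] {μ : Measure X}
    {f g : X → Y} (hf : AEMeasurable f μ) (hg : AEMeasurable g μ) :
    ∫ x, {x | f x ≠ g x}.indicator 1 x ∂μ = disagreement μ f g := by
  rw [integral_indicator₀ (nullMeasurableSet_ne_fun hf hg)]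
  simp [disagreement]

lemma one_sub_card_mul_exp_le_measureReal_pi_forall_disagreement_le [DecidableEq Y]
    [MeasurableSpace Y] [MeasurableEq Y] {μ : ι → Measure X} [∀ t, IsProbabilityMeasure (μ t)]
    (H : Finset (X → Y)) {c : X → Y} {y : ι → X → Y} (hH : ∀ h ∈ H, ∀ t, AEMeasurable h (μ t))
    (hc : ∀ t, AEMeasurable c (μ t)) (hy : ∀ t, AEMeasurable (y t) (μ t)) {s : ℝ} (hs : 0 ≤ s) :
    1 - H.card * Real.exp (-s ^ 2 / (2 * Fintype.card ι)) ≤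
      (Measure.pi μ).real {ω | ∀ h ∈ H, numErrors y ω h ≤ numErrors y ω c →
        ∑ t, (disagreement (μ t) h (y t) - disagreement (μ t) c (y t)) ≤ s} := by
  let loss (h : X → Y) (t : ι) : X → ℝ := {x | h x ≠ y t x}.indicator 1
  have hmeas {h : X → Y} (hh : ∀ t, AEMeasurable h (μ t)) (t : ι) : AEMeasurable (loss h t) (μ t) :=
    aemeasurable_one.indicator₀ (nullMeasurableSet_ne_fun (hh t) (hy t))
  have hmem (h : X → Y) (t : ι) : ∀ᵐ x ∂μ t, loss h t x ∈ Set.Icc (0 : ℝ) 1 :=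
    ae_of_all _ fun x ↦ ⟨Set.indicator_nonneg (fun _ _ ↦ zero_le_one) x,
      Set.indicator_le_self' (fun _ _ ↦ zero_le_one) x⟩
  have hHoeffding := one_sub_card_mul_exp_le_measureReal_pi_forall_le H
    (fun h hh ↦ hmeas (hH h hh)) (fun h _ ↦ hmem h) (hmeas hc) (hmem c) hs
  simp only [sub_zero, one_pow, Finset.sum_const, Finset.card_univ, nsmul_eq_mul, mul_one]
    at hHoeffding
  refine hHoeffding.trans (measureReal_mono fun ω hω h hh hle ↦ ?_)
  simp only [← integral_indicator_ne_one (hH h hh _) (hy _),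
    ← integral_indicator_ne_one (hc _) (hy _)]
  refine hω h hh ?_
  simpa only [loss, sum_indicator_ne_one, Nat.cast_le] using hle

end Classification

section PseudoLabeling

variable {X Y ι κ υ : Type*}

/-- The labelers of the sample of co-training: the points indexed by `ι` are labeled by the target
concept `c`, and those of the `k`-th block, each block being indexed by `υ`, by the pseudo-labeler
`g k`. -/
def pseudoLabeling (c : X → Y) (g : κ → X → Y) : ι ⊕ κ × υ → X → Y :=
  Sum.elim (fun _ ↦ c) fun p ↦ g p.1

lemma sum_disagreement_pseudoLabeling [MeasurableSpace X] [Fintype ι] [Fintype κ] [Fintype υ]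
    (μ : Measure X) (c : X → Y) (g : κ → X → Y) (h : X → Y) :
    ∑ t : ι ⊕ κ × υ, (disagreement μ h (pseudoLabeling c g t) -
        disagreement μ c (pseudoLabeling c g t)) =
      Fintype.card ι * disagreement μ h c +
        Fintype.card υ * ∑ k, (disagreement μ h (g k) - disagreement μ (g k) c) := by
  simp only [pseudoLabeling, Fintype.sum_sum_type, Fintype.sum_prod_type, Sum.elim_inl,
    Sum.elim_inr, disagreement_self, sub_zero, Finset.sum_const, Finset.card_univ, nsmul_eq_mul,
    Finset.mul_sum, disagreement_comm μ c]

end PseudoLabeling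

lemma mul_exp_neg_le_of_log_le {m δ ε l : ℝ} (hδ : 0 < δ) (hε : ε ≠ 0)
    (hl : 2 / ε ^ 2 * Real.log (m / δ) ≤ l) : m * Real.exp (-(ε ^ 2 * l / 2)) ≤ δ := by
  obtain hm | hm := le_or_gt m 0
  · exact (mul_nonpos_of_nonpos_of_nonneg hm (Real.exp_pos _).le).trans hδ.le
  have hlog : Real.log (m / δ) ≤ ε ^ 2 * l / 2 := by
    rw [div_mul_eq_mul_div, div_le_iff₀ (by positivity)] at hl
    linarith
  rw [Real.exp_neg, ← div_eq_mul_inv, div_le_comm₀ (Real.exp_pos _) hδ]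
  exact (Real.log_le_iff_le_exp (by positivity)).1 hlog

theorem stmt0_general {X Y : Type*} [MeasurableSpace X] [MeasurableSpace Y] [MeasurableEq Y]
    [DecidableEq Y] (μ : Measure X) [IsProbabilityMeasure μ] {c : X → Y} (hc : AEMeasurable c μ)
    (H : Finset (X → Y)) (hH : ∀ h ∈ H, AEMeasurable h μ) {l : ℕ} (hl : 1 ≤ l) (u : ℕ) {i : ℕ}
    {g : Fin i → X → Y} (hg : ∀ k, AEMeasurable (g k) μ) {ε δ : ℝ} (hε : 0 < ε) (hδ : 0 < δ)
    (hlbig : 2 / ε ^ 2 * Real.log (H.card / δ) ≤ l) :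
    1 - δ ≤ (Measure.pi fun _ : Fin l ⊕ (Fin i × Fin u) ↦ μ).real
      {ω | ∀ h ∈ H, numErrors (pseudoLabeling c g) ω h ≤ numErrors (pseudoLabeling c g) ω c →
        disagreement μ h c ≤ (ε * Real.sqrt ((l : ℝ) ^ 2 + i * u * l) -
          u * ∑ k, (disagreement μ h (g k) - disagreement μ (g k) c)) / l} := by
  have hl₀ : (0 : ℝ) < l := by exact_mod_cast hl
  have hy (t : Fin l ⊕ (Fin i × Fin u)) : AEMeasurable (pseudoLabeling c g t) μ :=
    t.rec (fun _ ↦ hc) fun p ↦ hg p.1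
  set s := ε * Real.sqrt ((l : ℝ) ^ 2 + i * u * l)
  have hexponent : -s ^ 2 / (2 * Fintype.card (Fin l ⊕ (Fin i × Fin u))) = -(ε ^ 2 * l / 2) := by
    have hn : (l : ℝ) + i * u ≠ 0 := by positivity
    simp only [s, mul_pow, Fintype.card_sum, Fintype.card_prod, Fintype.card_fin]
    rw [Real.sq_sqrt (by positivity)]
    push_cast
    field_simp
  have hPAC := one_sub_card_mul_exp_le_measureReal_pi_forall_disagreement_le H
    (fun h hh _ ↦ hH h hh) (fun _ ↦ hc) hy (show 0 ≤ s by positivity)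
  rw [hexponent] at hPAC
  have hfail := mul_exp_neg_le_of_log_le hδ hε.ne' hlbig
  refine (sub_le_sub_left hfail 1).trans (hPAC.trans (measureReal_mono fun ω hω h hh hle ↦ ?_))
  have hexcess := hω h hh hle
  rw [sum_disagreement_pseudoLabeling, Fintype.card_fin, Fintype.card_fin] at hexcess
  rw [le_div_iff₀ hl₀]
  linarith

/-- PAC bound for an empirical-risk minimizer trained on `l` examples
labeled by the target concept `c` together with `i` blocks of `u` random instances
pseudo-labeled by `g₀,…,g_{i−1}`. With probability at least `1 − δ` over the i.i.d.
sample, every empirical-risk minimizer `h ∈ H` satisfies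
`err(h) ≤ (ε·√(l² + i·u·l) − u·Σ_{k<i} (d(h,g_k) − err(g_k))) / l`. -/
theorem stmt0 {X : Type*} [MeasurableSpace X] (μ : Measure X) [IsProbabilityMeasure μ]
    (c : X → Bool) (hc : Measurable c)
    (H : Finset (X → Bool)) (hHmeas : ∀ h ∈ H, Measurable h) (hcH : c ∈ H)
    (l u i : ℕ) (hl : 1 ≤ l) (hu : 1 ≤ u)
    (g : Fin i → X → Bool) (hg : ∀ k, Measurable (g k))
    (ε δ : ℝ) (hε : ε ∈ Set.Ioo (0 : ℝ) 1) (hδ : δ ∈ Set.Ioo (0 : ℝ) 1)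
    (hlbig : (l : ℝ) ≥ 2 / ε ^ 2 * Real.log (2 * H.card / δ)) :
    ((Measure.pi fun _ : Fin l ⊕ (Fin i × Fin u) => μ)
      {ω | ∀ h ∈ H,
        (∀ h' ∈ H,
          (Finset.univ.filter fun t : Fin l ⊕ (Fin i × Fin u) =>
            h (ω t) ≠ Sum.elim (fun _ => c) (fun p => g p.1) t (ω t)).card ≤
          (Finset.univ.filter fun t : Fin l ⊕ (Fin i × Fin u) =>
            h' (ω t) ≠ Sum.elim (fun _ => c) (fun p => g p.1) t (ω t)).card) →
        (μ {x | h x ≠ c x}).toReal ≤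
          (ε * Real.sqrt ((l : ℝ) ^ 2 + (i : ℝ) * (u : ℝ) * (l : ℝ))
            - (u : ℝ) * ∑ k : Fin i,
                ((μ {x | h x ≠ g k x}).toReal
                  - (μ {x | g k x ≠ c x}).toReal)) / (l : ℝ)}).toReal
      ≥ 1 - δ := by
  have hδ₀ : 0 < δ := hδ.1
  have hcard : 0 < H.card := Finset.card_pos.2 ⟨c, hcH⟩
  have hlog : 2 / ε ^ 2 * Real.log (H.card / δ) ≤ 2 / ε ^ 2 * Real.log (2 * H.card / δ) := by
    gcongr
    linarith
  exact (stmt0_general μ hc.aemeasurable H (fun h hh ↦ (hHmeas h hh).aemeasurable) hl u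
    (fun k ↦ (hg k).aemeasurable) hε.1 hδ₀ (hlog.trans hlbig)).trans <|
      measureReal_mono fun ω hω h hh hmin ↦ hω h hh (hmin c hcH)
end

section
/- Let U and L be finite types. Let Q : U → U → ℝ and B : U → L → ℝ have all entries nonnegative, and let c_U : U → {−1,+1} and c_L : L → {−1,+1} be labelings satisfying the perfect-graph condition: Q i j > 0 → c_U i = c_U j, and B i s > 0 → c_U i = c_L s. Let Y : L → ℝ be given by Y s = c_L s (as ±1 reals). Assume that for every t ∈ U the series F t = Σ'_{m : ℕ} ((Q^m * B) *ᵥ Y) t is summable. Then for every t ∈ U: F t ≠ 0 if and only if there exist j ∈ U and s ∈ L with Relation.ReflTransGen (fun a b => Q a b > 0) t j and B j s > 0; and in that case F t · (c_U t) > 0, i.e., the propagated value has the correct sign. -/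
open Matrix

/-
Entries of `Q ^ m * B` are sums over walks of products of nonnegative weights, so such an entry is
positive exactly when some walk has only positive edges. On a perfect graph every such walk carries
a single label. Hence each term `((Q ^ m * B) *ᵥ cL) t` is a nonnegative weight times
`cU t`: nothing cancels in the series, and it vanishes only if every weight does.
-/

section PositiveEntries

variable {l m n R : Type*} [Semiring R] [PartialOrder R]

theorem matrix_mul_apply_nonneg [IsOrderedRing R] [Fintype m] {A : Matrix l m R} {B : Matrix m n R}
    (hA : ∀ i j, 0 ≤ A i j) (hB : ∀ j k, 0 ≤ B j k) (i : l) (k : n) : 0 ≤ (A * B) i k :=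
  Finset.sum_nonneg fun j _ ↦ mul_nonneg (hA i j) (hB j k)

variable [IsStrictOrderedRing R]

theorem matrix_mul_apply_pos_iff [Fintype m] {A : Matrix l m R} {B : Matrix m n R}
    (hA : ∀ i j, 0 ≤ A i j) (hB : ∀ j k, 0 ≤ B j k) {i : l} {k : n} :
    0 < (A * B) i k ↔ ∃ j, 0 < A i j ∧ 0 < B j k := by
  rw [mul_apply, Finset.sum_pos_iff_of_nonneg fun j _ ↦ mul_nonneg (hA i j) (hB j k)]
  constructor
  · rintro ⟨j, -, hj⟩
    exact ⟨j, (hA i j).lt_of_ne' (left_ne_zero_of_mul hj.ne'),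
      (hB j k).lt_of_ne' (right_ne_zero_of_mul hj.ne')⟩
  · rintro ⟨j, hAj, hBj⟩
    exact ⟨j, Finset.mem_univ j, mul_pos hAj hBj⟩

theorem matrix_one_apply_pos_iff [DecidableEq n] {i j : n} :
    0 < (1 : Matrix n n R) i j ↔ i = j := by
  by_cases h : i = j <;> simp [one_apply, h]

variable [Fintype n] [DecidableEq n] {A : Matrix n n R}

theorem exists_matrix_pow_apply_pos_iff_reflTransGen (hA : ∀ i j, 0 ≤ A i j) {i j : n} :
    (∃ k : ℕ, 0 < (A ^ k) i j) ↔ Relation.ReflTransGen (fun a b ↦ 0 < A a b) i j := by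
  constructor
  · rintro ⟨k, hk⟩
    induction k generalizing j with
    | zero =>
      obtain rfl := matrix_one_apply_pos_iff.1 (pow_zero A ▸ hk)
      exact .refl
    | succ k ih =>
      rw [pow_succ, matrix_mul_apply_pos_iff (pow_apply_nonneg hA k) hA] at hk
      obtain ⟨b, hib, hbj⟩ := hk
      exact (ih hib).tail hbj
  · intro hij
    induction hij with
    | refl => exact ⟨0, by simp⟩
    | tail _ hbj ih =>
      obtain ⟨k, hk⟩ := ih
      refine ⟨k + 1, ?_⟩
      rw [pow_succ, matrix_mul_apply_pos_iff (pow_apply_nonneg hA k) hA]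
      exact ⟨_, hk, hbj⟩

theorem exists_matrix_pow_mul_apply_pos_iff (hA : ∀ i j, 0 ≤ A i j) {B : Matrix n l R}
    (hB : ∀ j s, 0 ≤ B j s) {i : n} {s : l} :
    (∃ k : ℕ, 0 < (A ^ k * B) i s) ↔
      ∃ j, Relation.ReflTransGen (fun a b ↦ 0 < A a b) i j ∧ 0 < B j s := by
  simp only [matrix_mul_apply_pos_iff (pow_apply_nonneg hA _) hB,
    ← exists_matrix_pow_apply_pos_iff_reflTransGen hA, ← exists_and_right]
  exact exists_comm

end PositiveEntries

/-- The perfect-graph condition on a block `A` of the transition matrix, whose rows and columns are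
labelled by `c` and `d`: a positive entry connects two instances with the same label. Keeping
`c` and `d` separate covers both the block `P^{UU}` and the rectangular block `P^{UL}`. -/
def IsPerfect {m n R α : Type*} [Zero R] [LT R] (A : Matrix m n R) (c : m → α) (d : n → α) : Prop :=
  ∀ i j, 0 < A i j → c i = d j

namespace IsPerfect

variable {l m n R α : Type*} [Semiring R] [PartialOrder R]

theorem mulVec_apply [Fintype n] {A : Matrix m n R} {c : m → R} {d : n → R} (h : IsPerfect A c d)
    (hA : ∀ i j, 0 ≤ A i j) (i : m) : (A *ᵥ d) i = (∑ j, A i j) * c i := by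
  rw [mulVec, dotProduct, Finset.sum_mul]
  refine Finset.sum_congr rfl fun j _ ↦ ?_
  obtain hij | hij := (hA i j).eq_or_lt
  · simp only [← hij, zero_mul]
  · rw [h i j hij]

variable [IsStrictOrderedRing R]

theorem mul [Fintype m] {A : Matrix l m R} {B : Matrix m n R} {c : l → α} {d : m → α} {e : n → α}
    (h : IsPerfect A c d) (h' : IsPerfect B d e) (hA : ∀ i j, 0 ≤ A i j) (hB : ∀ j k, 0 ≤ B j k) :
    IsPerfect (A * B) c e := fun i k hik ↦
  let ⟨j, hij, hjk⟩ := (matrix_mul_apply_pos_iff hA hB).1 hik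
  (h i j hij).trans (h' j k hjk)

theorem one [DecidableEq n] (c : n → α) : IsPerfect (1 : Matrix n n R) c c := fun _ _ hij ↦
  congrArg c (matrix_one_apply_pos_iff.1 hij)

theorem pow [Fintype n] [DecidableEq n] {A : Matrix n n R} {c : n → α} (h : IsPerfect A c c)
    (hA : ∀ i j, 0 ≤ A i j) : ∀ k : ℕ, IsPerfect (A ^ k) c c
  | 0 => by simpa only [pow_zero] using one c
  | k + 1 => by simpa only [pow_succ] using (pow h hA k).mul h (pow_apply_nonneg hA k) hA

end IsPerfect

theorem pos_iff_of_hasSum_of_nonneg {ι M : Type*} [AddCommMonoid M] [PartialOrder M]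
    [IsOrderedAddMonoid M] [TopologicalSpace M] [OrderClosedTopology M] {f : ι → M} {a : M}
    (hf : ∀ i, 0 ≤ f i) (ha : HasSum f a) : 0 < a ↔ ∃ i, 0 < f i := by
  have hzero : a = 0 ↔ f = 0 :=
    ⟨fun h ↦ (hasSum_zero_iff_of_nonneg hf).1 (h ▸ ha), fun h ↦ ha.unique (h ▸ hasSum_zero)⟩
  simp only [(ha.nonneg hf).lt_iff_ne', (hf _).lt_iff_ne', ne_eq, hzero, funext_iff,
    Pi.zero_apply, not_forall]

section HasSumMulRight

variable {ι R : Type*} [Ring R] [LinearOrder R] [IsStrictOrderedRing R] [TopologicalSpace R]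
  [OrderClosedTopology R] [IsTopologicalSemiring R] {w : ι → R} {c x : R}

theorem mul_pos_iff_of_hasSum_mul_right (hw : ∀ i, 0 ≤ w i) (hc : c ≠ 0)
    (hx : HasSum (fun i ↦ w i * c) x) : 0 < x * c ↔ ∃ i, 0 < w i := by
  -- A second factor `c` makes the terms nonnegative whatever the sign of `c`.
  have hxc : HasSum (fun i ↦ w i * (c * c)) (x * c) := by
    simpa only [mul_assoc] using hx.mul_right c
  rw [pos_iff_of_hasSum_of_nonneg (fun i ↦ mul_nonneg (hw i) (mul_self_nonneg c)) hxc]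
  simp only [mul_pos_iff_of_pos_right (mul_self_pos.2 hc)]

theorem ne_zero_iff_of_hasSum_mul_right (hw : ∀ i, 0 ≤ w i) (hc : c ≠ 0)
    (hx : HasSum (fun i ↦ w i * c) x) : x ≠ 0 ↔ ∃ i, 0 < w i := by
  refine ⟨fun hx0 ↦ ?_, fun h ↦ ?_⟩
  · by_contra! hle
    have hw0 : w = 0 := funext fun i ↦ (hle i).antisymm (hw i)
    exact hx0 (hx.unique (by simpa only [hw0, Pi.zero_apply, zero_mul] using hasSum_zero))
  · exact left_ne_zero_of_mul ((mul_pos_iff_of_hasSum_mul_right hw hc hx).2 h).ne'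

end HasSumMulRight

theorem stmt7_general {U L R : Type*} [Fintype U] [Fintype L] [DecidableEq U]
    [Ring R] [LinearOrder R] [IsStrictOrderedRing R]
    [TopologicalSpace R] [OrderClosedTopology R] [IsTopologicalSemiring R]
    {Q : Matrix U U R} {B : Matrix U L R} (hQ : ∀ i j, 0 ≤ Q i j) (hB : ∀ i s, 0 ≤ B i s)
    {cU : U → R} {cL : L → R} (hperfQ : IsPerfect Q cU cU) (hperfB : IsPerfect B cU cL)
    {t : U} (ht : cU t ≠ 0) {x : R} (hx : HasSum (fun m : ℕ ↦ ((Q ^ m * B) *ᵥ cL) t) x) :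
    (x ≠ 0 ↔ ∃ j s, Relation.ReflTransGen (fun a b ↦ 0 < Q a b) t j ∧ 0 < B j s) ∧
      (x ≠ 0 → 0 < x * cU t) := by
  have hQB (m : ℕ) : ∀ i s, 0 ≤ (Q ^ m * B) i s :=
    matrix_mul_apply_nonneg (pow_apply_nonneg hQ m) hB
  have hperf (m : ℕ) : IsPerfect (Q ^ m * B) cU cL :=
    (hperfQ.pow hQ m).mul hperfB (pow_apply_nonneg hQ m) hB
  simp only [(hperf _).mulVec_apply (hQB _)] at hx
  have hw (m : ℕ) : 0 ≤ ∑ s, (Q ^ m * B) t s := Finset.sum_nonneg fun s _ ↦ hQB m t s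
  have hreach : (∃ m : ℕ, 0 < ∑ s, (Q ^ m * B) t s) ↔
      ∃ j s, Relation.ReflTransGen (fun a b ↦ 0 < Q a b) t j ∧ 0 < B j s := by
    simp only [Finset.sum_pos_iff_of_nonneg fun s _ ↦ hQB _ t s, Finset.mem_univ, true_and]
    rw [exists_comm, exists_comm (α := U)]
    simp only [exists_matrix_pow_mul_apply_pos_iff hQ hB]
  have hne : x ≠ 0 ↔ ∃ m : ℕ, 0 < ∑ s, (Q ^ m * B) t s :=
    ne_zero_iff_of_hasSum_mul_right hw ht hx
  exact ⟨hne.trans hreach,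
    fun hx0 ↦ (mul_pos_iff_of_hasSum_mul_right hw ht hx).2 (hne.1 hx0)⟩

/-- label propagation on perfect graphs. With nonnegative blocks
`Q = P^{UU}` and `B = P^{UL}` satisfying the perfect-graph condition and ±1 labelings
`cU`, `cL`, the propagated value `F t = Σ'_m ((Q^m * B) *ᵥ cL) t` is nonzero iff `t`
is connected through positive entries of `Q` to some `j` with a positive entry
`B j s`, and in that case `F t` has the sign of the true label `cU t`. -/
theorem stmt7 {U L : Type*} [Fintype U] [Fintype L] [DecidableEq U]
    (Q : Matrix U U ℝ) (B : Matrix U L ℝ)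
    (hQ : ∀ i j, 0 ≤ Q i j) (hB : ∀ i s, 0 ≤ B i s)
    (cU : U → ℝ) (cL : L → ℝ)
    (hcU : ∀ i, cU i = 1 ∨ cU i = -1) (hcL : ∀ s, cL s = 1 ∨ cL s = -1)
    (hperfQ : ∀ i j, 0 < Q i j → cU i = cU j)
    (hperfB : ∀ i s, 0 < B i s → cU i = cL s)
    (F : U → ℝ)
    (hsum : ∀ t, Summable (fun m : ℕ => ((Q ^ m * B) *ᵥ cL) t))
    (hF : ∀ t, F t = ∑' m : ℕ, ((Q ^ m * B) *ᵥ cL) t) :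
    ∀ t, (F t ≠ 0 ↔
        ∃ j s, Relation.ReflTransGen (fun a b => 0 < Q a b) t j ∧ 0 < B j s)
      ∧ (F t ≠ 0 → 0 < F t * cU t) := by
  have hcU0 (t : U) : cU t ≠ 0 := by rcases hcU t with h | h <;> simp [h]
  exact fun t ↦ stmt7_general hQ hB hperfQ hperfB (hcU0 t) (hF t ▸ (hsum t).hasSum)
end

section
/- Let μ be a probability measure on a measurable space Ω, let y : Ω → {−1,+1} and f₁, f₂ : Ω → ℝ be measurable, and assume f₁ ω ≠ 0 and f₂ ω ≠ 0 for μ-almost every ω. Define err₁ = μ{ω : f₁ ω · y ω < 0}, err₂ = μ{ω : f₂ ω · y ω < 0}, d = μ{ω : f₁ ω · f₂ ω < 0}, and err_com = μ{ω : (f₁ ω + f₂ ω) · y ω ≤ 0}. Then err_com ≥ (err₁ + err₂ − d) / 2. -/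
open MeasureTheory

/-!
Let `A` and `B` be the events that `f₁` and `f₂` err, `C` the event that the combination errs, and
`D` the event that `f₁` and `f₂` disagree. If both err, so does the combination: `A ∩ B ⊆ C`. If
one errs and the combination does not, the other margin outweighs it with the opposite sign, so the
two disagree: `A ∪ B ⊆ C ∪ D`. Hence `μ A + μ B = μ (A ∪ B) + μ (A ∩ B) ≤ 2 * μ C + μ D`.
-/

section Pointwise

variable {R : Type*} [CommRing R] [LinearOrder R] [IsStrictOrderedRing R] {a b c : R}

theorem add_mul_nonpos_of_mul_nonpos (hac : a * c ≤ 0) (hbc : b * c ≤ 0) : (a + b) * c ≤ 0 := by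
  rw [add_mul]
  exact add_nonpos hac hbc

theorem mul_neg_of_mul_neg_of_mul_pos (hac : a * c < 0) (hbc : 0 < b * c) : a * b < 0 := by
  have hprod : a * b * (c * c) < 0 := by
    rw [mul_mul_mul_comm]
    exact mul_neg_of_neg_of_pos hac hbc
  exact neg_of_mul_neg_left hprod (mul_self_nonneg c)

theorem add_mul_nonpos_or_mul_neg (hac : a * c < 0) : (a + b) * c ≤ 0 ∨ a * b < 0 :=
  (le_or_gt (b * c) 0).imp (add_mul_nonpos_of_mul_nonpos hac.le)
    (mul_neg_of_mul_neg_of_mul_pos hac)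

end Pointwise

section Measure

variable {Ω : Type*} [MeasurableSpace Ω] {μ : Measure Ω}

theorem measure_add_measure_le_of_inter_subset_of_union_subset {A B C D : Set Ω}
    (hB : NullMeasurableSet B μ) (hinter : A ∩ B ⊆ C) (hunion : A ∪ B ⊆ C ∪ D) :
    μ A + μ B ≤ 2 * μ C + μ D :=
  calc
    μ A + μ B = μ (A ∪ B) + μ (A ∩ B) := (measure_union_add_inter₀ A hB).symm
    _ ≤ (μ C + μ D) + μ C := by
      gcongr
      exact (measure_mono hunion).trans (measure_union_le C D)
    _ = 2 * μ C + μ D := by ring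

section Margins

variable {R : Type*} [CommRing R] [LinearOrder R] [IsStrictOrderedRing R] {y f₁ f₂ : Ω → R}

theorem measure_mul_neg_add_measure_mul_neg_le
    (hf₂y : NullMeasurableSet {ω | f₂ ω * y ω < 0} μ) :
    μ {ω | f₁ ω * y ω < 0} + μ {ω | f₂ ω * y ω < 0} ≤
      2 * μ {ω | (f₁ ω + f₂ ω) * y ω ≤ 0} + μ {ω | f₁ ω * f₂ ω < 0} := by
  refine measure_add_measure_le_of_inter_subset_of_union_subset hf₂y ?both_err ?one_errs
  case both_err =>
    rintro ω ⟨h₁, h₂⟩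
    exact add_mul_nonpos_of_mul_nonpos (le_of_lt h₁) (le_of_lt h₂)
  case one_errs =>
    rintro ω (h₁ | h₂)
    · exact add_mul_nonpos_or_mul_neg h₁
    · change (f₁ ω + f₂ ω) * y ω ≤ 0 ∨ f₁ ω * f₂ ω < 0
      rw [add_comm (f₁ ω), mul_comm (f₁ ω)]
      exact add_mul_nonpos_or_mul_neg h₂

theorem stmt12_general [IsFiniteMeasure μ] (hf₂y : NullMeasurableSet {ω | f₂ ω * y ω < 0} μ) :
    μ.real {ω | (f₁ ω + f₂ ω) * y ω ≤ 0} ≥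
      (μ.real {ω | f₁ ω * y ω < 0} + μ.real {ω | f₂ ω * y ω < 0}
        - μ.real {ω | f₁ ω * f₂ ω < 0}) / 2 := by
  have hbound := ENNReal.toReal_mono (by finiteness)
    (measure_mul_neg_add_measure_mul_neg_le (f₁ := f₁) hf₂y)
  rw [ENNReal.toReal_add (by finiteness) (by finiteness),
    ENNReal.toReal_add (by finiteness) (by finiteness), ENNReal.toReal_mul,
    ENNReal.toReal_ofNat] at hbound
  simp only [measureReal_def]
  linarith

end Margins

end Measure

/-- the error of the margin combination `sign(f₁+f₂)` is at least the
probability that both individual classifiers err, i.e.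
`err_com ≥ (err₁ + err₂ − d)/2`. -/
theorem stmt12 {Ω : Type*} [MeasurableSpace Ω] (μ : Measure Ω) [IsProbabilityMeasure μ]
    (y f₁ f₂ : Ω → ℝ) (hy : Measurable y) (hf₁ : Measurable f₁) (hf₂ : Measurable f₂)
    (hy1 : ∀ ω, y ω = 1 ∨ y ω = -1)
    (hne : ∀ᵐ ω ∂μ, f₁ ω ≠ 0 ∧ f₂ ω ≠ 0) :
    (μ {ω | (f₁ ω + f₂ ω) * y ω ≤ 0}).toReal ≥
      ((μ {ω | f₁ ω * y ω < 0}).toReal + (μ {ω | f₂ ω * y ω < 0}).toReal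
        - (μ {ω | f₁ ω * f₂ ω < 0}).toReal) / 2 := by
  exact stmt12_general (measurableSet_lt (hf₂.mul hy) measurable_const).nullMeasurableSet
end

section
/- Let μ be a probability measure on a measurable space Ω, let y : Ω → {−1,+1} and f₁, f₂ : Ω → ℝ be measurable with |f₁| ≤ 1, |f₂| ≤ 1 and f₁ ω ≠ 0, f₂ ω ≠ 0 for μ-almost every ω. Let DIS = {ω : f₁ ω · f₂ ω < 0} and assume μ(DIS) > 0. On Ω define G ω = |f₁ ω| if f₁ ω · y ω > 0 and G ω = |f₂ ω| otherwise; define R ω = |f₂ ω| if f₁ ω · y ω > 0 and R ω = |f₁ ω| otherwise (so on DIS, G is the margin of the correct classifier and R the margin of the incorrect one). Let C ≥ 0 and k ≥ 0 be reals, and suppose: (a) under the conditional measure μ[·|DIS], the random variables G and R are independent, and (b) for every t ∈ (0,1], μ(G ≤ t | DIS) ≤ C·t^k. Then μ{ω : (f₁ ω + f₂ ω) · y ω ≤ 0} ≤ (err₁ + err₂ − d)/2 + C·∫_{DIS} (R ω)^k dμ, where err_v = μ{f_v · y < 0} and d = μ(DIS). -/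
open MeasureTheory
open scoped ProbabilityTheory

/-!
Up to null sets, two classifiers disagree exactly where one of them errs and the other does not, so
`μ (E₁ ∩ E₂) = (err₁ + err₂ - d) / 2`. Where they agree, the combination errs only if both do; where
they disagree, `(f₁ + f₂) * y = (G - R) * |y|`, so it errs exactly when `G ≤ R`. Since `G` and `R`
are independent given disagreement, Fubini computes the conditional probability of `G ≤ R` by
freezing `R` at each of its values, where the small-margin condition bounds the mass of `G ≤ R ω`.
-/

section Independence

open ProbabilityTheory

variable {Ω α β : Type*} [MeasurableSpace Ω] [MeasurableSpace α] [MeasurableSpace β]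
  {μ : Measure Ω} [IsFiniteMeasure μ] {X : Ω → α} {Y : Ω → β} {S : Set (α × β)} {h : Ω → ℝ}
  {D : Set Ω}

lemma measure_prodMk_mem_eq_lintegral_of_indepFun (hX : AEMeasurable X μ) (hY : AEMeasurable Y μ)
    (hXY : X ⟂ᵢ[μ] Y) (hS : MeasurableSet S) :
    μ {ω | (X ω, Y ω) ∈ S} = ∫⁻ ω, μ {ω' | (X ω', Y ω) ∈ S} ∂μ := by
  calc μ {ω | (X ω, Y ω) ∈ S}
    _ = μ.map (fun ω ↦ (X ω, Y ω)) S := (Measure.map_apply_of_aemeasurable (hX.prodMk hY) hS).symm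
    _ = ((μ.map X).prod (μ.map Y)) S := by rw [hXY.map_prod_eq_prod_map_map hX hY]
    _ = ∫⁻ b, μ.map X ((fun a ↦ (a, b)) ⁻¹' S) ∂(μ.map Y) := Measure.prod_apply_symm hS
    _ = ∫⁻ ω, μ.map X ((fun a ↦ (a, Y ω)) ⁻¹' S) ∂μ :=
      lintegral_map' (measurable_measure_prodMk_right hS).aemeasurable hY
    _ = ∫⁻ ω, μ {ω' | (X ω', Y ω) ∈ S} ∂μ :=
      lintegral_congr fun _ ↦ Measure.map_apply_of_aemeasurable hX (measurable_prodMk_right hS)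

lemma measureReal_prodMk_mem_le_integral_of_indepFun (hX : AEMeasurable X μ)
    (hY : AEMeasurable Y μ) (hXY : X ⟂ᵢ[μ] Y) (hS : MeasurableSet S) (hh : Integrable h μ)
    (hle : ∀ᵐ ω ∂μ, μ.real {ω' | (X ω', Y ω) ∈ S} ≤ h ω) :
    μ.real {ω | (X ω, Y ω) ∈ S} ≤ ∫ ω, h ω ∂μ := by
  have h_nonneg : 0 ≤ᵐ[μ] h := hle.mono fun _ ↦ measureReal_nonneg.trans
  refine ENNReal.toReal_le_of_le_ofReal (integral_nonneg_of_ae h_nonneg) ?_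
  rw [measure_prodMk_mem_eq_lintegral_of_indepFun hX hY hXY hS,
    ofReal_integral_eq_lintegral_ofReal hh h_nonneg]
  exact lintegral_mono_ae (hle.mono fun _ hω ↦
    (ENNReal.le_ofReal_iff_toReal_le (measure_ne_top _ _) (measureReal_nonneg.trans hω)).2 hω)

lemma measureReal_mul_integral_cond (D : Set Ω) (h : Ω → ℝ) :
    μ.real D * ∫ ω, h ω ∂μ[|D] = ∫ ω in D, h ω ∂μ := by
  rw [← measure_smul_setAverage h (measure_ne_top μ D), average, Measure.restrict_apply_univ,
    smul_eq_mul, ProbabilityTheory.cond]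

lemma measureReal_inter_le_setIntegral_of_indepFun_cond (hD : MeasurableSet D)
    (hX : AEMeasurable X μ[|D]) (hY : AEMeasurable Y μ[|D]) (hXY : X ⟂ᵢ[μ[|D]] Y)
    (hS : MeasurableSet S) (hh : IntegrableOn h D μ)
    (hle : ∀ ω ∈ D, μ[|D].real {ω' | (X ω', Y ω) ∈ S} ≤ h ω) :
    μ.real (D ∩ {ω | (X ω, Y ω) ∈ S}) ≤ ∫ ω in D, h ω ∂μ := by
  by_cases hD0 : μ D = 0
  · rw [measureReal_def, measure_inter_null_of_null_left _ hD0, setIntegral_measure_zero _ hD0,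
      ENNReal.toReal_zero]
  have hh_cond : Integrable h μ[|D] := hh.smul_measure (ENNReal.inv_ne_top.2 hD0)
  calc μ.real (D ∩ {ω | (X ω, Y ω) ∈ S})
    _ = μ.real D * μ[|D].real {ω | (X ω, Y ω) ∈ S} := by
      simp only [measureReal_def, ← cond_mul_eq_inter hD, ENNReal.toReal_mul, mul_comm]
    _ ≤ μ.real D * ∫ ω, h ω ∂μ[|D] := by
      gcongr
      exact measureReal_prodMk_mem_le_integral_of_indepFun hX hY hXY hS hh_cond
        (ae_cond_of_forall_mem hD hle)
    _ = ∫ ω in D, h ω ∂μ := measureReal_mul_integral_cond D h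

end Independence

section FiniteMeasure

variable {Ω : Type*} [MeasurableSpace Ω] {μ : Measure Ω} [IsFiniteMeasure μ]

lemma measureReal_inter_eq_half_sub_symmDiff {s t : Set Ω} (hs : MeasurableSet s)
    (ht : MeasurableSet t) :
    μ.real (s ∩ t) = (μ.real s + μ.real t - μ.real (symmDiff s t)) / 2 := by
  have h_symmDiff : μ.real (symmDiff s t) = μ.real (s \ t) + μ.real (t \ s) :=
    measureReal_symmDiff_eq hs ht
  have hs_split : μ.real (s ∩ t) + μ.real (s \ t) = μ.real s := measureReal_inter_add_sdiff ht
  have ht_split : μ.real (t ∩ s) + μ.real (t \ s) = μ.real t := measureReal_inter_add_sdiff hs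
  rw [Set.inter_comm] at ht_split
  linarith

lemma integrableOn_rpow_of_mem_Icc {X : Ω → ℝ} {D : Set Ω} {b k : ℝ} (hX : Measurable X)
    (hD : MeasurableSet D) (hk : 0 ≤ k) (hmem : ∀ ω ∈ D, X ω ∈ Set.Icc 0 b) :
    IntegrableOn (fun ω ↦ X ω ^ k) D μ := by
  refine Measure.integrableOn_of_bounded (M := b ^ k) (measure_ne_top μ D)
    (hX.pow_const k).aestronglyMeasurable (ae_restrict_of_forall_mem hD fun ω hω ↦ ?_)
  obtain ⟨h_nonneg, h_le⟩ := hmem ω hω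
  rw [Real.norm_of_nonneg (Real.rpow_nonneg h_nonneg k)]
  exact Real.rpow_le_rpow h_nonneg h_le hk

end FiniteMeasure

section Margins

variable {Ω : Type*} {y f g : Ω → ℝ} {ω : Ω} {b : ℝ}

/-- The error event of the classification rule `sign ∘ f` for the label `y`. The strict inequality
means that a vanishing margin does not count as an error. -/
def errorRegion (y f : Ω → ℝ) : Set Ω := {ω | f ω * y ω < 0}

/-- The region `DIS(f, g)` on which the classification rules `sign ∘ f` and `sign ∘ g` disagree;
points where one of the margins vanishes are left out. -/
def disagreementRegion (f g : Ω → ℝ) : Set Ω := {ω | f ω * g ω < 0}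

/-- The margin of the correct one of two classifiers. It has this meaning only on their disagreement
region; elsewhere it is `|f|` or `|g|` according to whether `f` is correct. -/
noncomputable def correctMargin (y f g : Ω → ℝ) (ω : Ω) : ℝ :=
  if 0 < f ω * y ω then |f ω| else |g ω|

/-- The margin of the incorrect one of two classifiers. It has this meaning only on their
disagreement region; elsewhere it is `|g|` or `|f|` according to whether `f` is correct. -/
noncomputable def incorrectMargin (y f g : Ω → ℝ) (ω : Ω) : ℝ :=
  if 0 < f ω * y ω then |g ω| else |f ω|

lemma mul_mul_mul_neg_iff_mem_disagreementRegion (hy : y ω ≠ 0) :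
    f ω * y ω * (g ω * y ω) < 0 ↔ ω ∈ disagreementRegion f g := by
  rw [mul_mul_mul_comm]
  exact lt_iff_lt_of_le_iff_le (mul_nonneg_iff_of_pos_right (mul_self_pos.2 hy))

lemma mem_disagreementRegion_iff_mem_symmDiff (hy : y ω ≠ 0) (hf : f ω ≠ 0) (hg : g ω ≠ 0) :
    ω ∈ disagreementRegion f g ↔ ω ∈ symmDiff (errorRegion y f) (errorRegion y g) := by
  have hf_pos : 0 < f ω * y ω ↔ ω ∉ errorRegion y f :=
    ⟨lt_asymm, fun h ↦ (mul_ne_zero hf hy).lt_of_le' (not_lt.1 h)⟩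
  have hg_pos : 0 < g ω * y ω ↔ ω ∉ errorRegion y g :=
    ⟨lt_asymm, fun h ↦ (mul_ne_zero hg hy).lt_of_le' (not_lt.1 h)⟩
  rw [← mul_mul_mul_neg_iff_mem_disagreementRegion hy, mul_neg_iff, hf_pos, hg_pos,
    Set.mem_symmDiff, or_comm, and_comm (a := ω ∉ errorRegion y f)]
  rfl

lemma add_mul_eq_correctMargin_sub_incorrectMargin (hω : ω ∈ disagreementRegion f g) :
    (f ω + g ω) * y ω = (correctMargin y f g ω - incorrectMargin y f g ω) * |y ω| := by
  rcases eq_or_ne (y ω) 0 with hy | hy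
  · rw [hy, mul_zero, abs_zero, mul_zero]
  unfold correctMargin incorrectMargin
  rcases mul_neg_iff.1 ((mul_mul_mul_neg_iff_mem_disagreementRegion hy).2 hω) with
    ⟨hf, hg⟩ | ⟨hf, hg⟩
  · rw [if_pos hf, if_pos hf, sub_mul, ← abs_mul, ← abs_mul, abs_of_pos hf, abs_of_neg hg]
    ring
  · rw [if_neg hf.not_gt, if_neg hf.not_gt, sub_mul, ← abs_mul, ← abs_mul, abs_of_neg hf,
      abs_of_pos hg]
    ring

lemma correctMargin_le_incorrectMargin_of_add_mul_nonpos (hy : y ω ≠ 0)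
    (hω : ω ∈ disagreementRegion f g) (herr : (f ω + g ω) * y ω ≤ 0) :
    correctMargin y f g ω ≤ incorrectMargin y f g ω := by
  rw [add_mul_eq_correctMargin_sub_incorrectMargin hω] at herr
  exact sub_nonpos.1 (nonpos_of_mul_nonpos_left herr (abs_pos.2 hy))

lemma mem_errorRegion_inter_of_add_mul_nonpos (hy : y ω ≠ 0) (hf : f ω ≠ 0) (hg : g ω ≠ 0)
    (hω : ω ∉ disagreementRegion f g) (herr : (f ω + g ω) * y ω ≤ 0) :
    ω ∈ errorRegion y f ∩ errorRegion y g := by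
  rw [← mul_mul_mul_neg_iff_mem_disagreementRegion hy, not_lt] at hω
  have h_agree : 0 < f ω * y ω * (g ω * y ω) :=
    hω.lt_of_ne' (mul_ne_zero (mul_ne_zero hf hy) (mul_ne_zero hg hy))
  rcases mul_pos_iff.1 h_agree with ⟨hf_pos, hg_pos⟩ | h_both_err
  · rw [add_mul] at herr
    exact absurd herr (add_pos hf_pos hg_pos).not_ge
  · exact h_both_err

lemma incorrectMargin_mem_Ioc (hω : ω ∈ disagreementRegion f g) (hf : |f ω| ≤ b)
    (hg : |g ω| ≤ b) : incorrectMargin y f g ω ∈ Set.Ioc 0 b := by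
  have hfg : f ω * g ω ≠ 0 := ne_of_lt hω
  unfold incorrectMargin
  split_ifs
  · exact ⟨abs_pos.2 (right_ne_zero_of_mul hfg), hg⟩
  · exact ⟨abs_pos.2 (left_ne_zero_of_mul hfg), hf⟩

variable [MeasurableSpace Ω] {μ : Measure Ω}

lemma measurableSet_errorRegion (hy : Measurable y) (hf : Measurable f) :
    MeasurableSet (errorRegion y f) :=
  measurableSet_lt (hf.mul hy) measurable_const

lemma measurableSet_disagreementRegion (hf : Measurable f) (hg : Measurable g) :
    MeasurableSet (disagreementRegion f g) :=
  measurableSet_lt (hf.mul hg) measurable_const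

lemma measurable_correctMargin (hy : Measurable y) (hf : Measurable f) (hg : Measurable g) :
    Measurable (correctMargin y f g) :=
  Measurable.ite (measurableSet_lt measurable_const (hf.mul hy)) hf.abs hg.abs

lemma measurable_incorrectMargin (hy : Measurable y) (hf : Measurable f) (hg : Measurable g) :
    Measurable (incorrectMargin y f g) :=
  Measurable.ite (measurableSet_lt measurable_const (hf.mul hy)) hg.abs hf.abs

lemma disagreementRegion_ae_eq_symmDiff (hy : ∀ᵐ ω ∂μ, y ω ≠ 0)
    (hfg : ∀ᵐ ω ∂μ, f ω ≠ 0 ∧ g ω ≠ 0) :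
    disagreementRegion f g =ᵐ[μ] symmDiff (errorRegion y f) (errorRegion y g) := by
  filter_upwards [hy, hfg] with ω hyω hfgω
  exact propext (mem_disagreementRegion_iff_mem_symmDiff hyω hfgω.1 hfgω.2)

variable [IsFiniteMeasure μ]

lemma integrableOn_incorrectMargin_rpow {k : ℝ} (hy : Measurable y) (hf : Measurable f)
    (hg : Measurable g) (hk : 0 ≤ k) (hfb : ∀ ω, |f ω| ≤ b) (hgb : ∀ ω, |g ω| ≤ b) :
    IntegrableOn (fun ω ↦ incorrectMargin y f g ω ^ k) (disagreementRegion f g) μ :=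
  integrableOn_rpow_of_mem_Icc (measurable_incorrectMargin hy hf hg)
    (measurableSet_disagreementRegion hf hg) hk fun ω hω ↦
    Set.Ioc_subset_Icc_self (incorrectMargin_mem_Ioc hω (hfb ω) (hgb ω))

lemma measureReal_errorRegion_inter (hy : Measurable y) (hf : Measurable f) (hg : Measurable g)
    (hy0 : ∀ᵐ ω ∂μ, y ω ≠ 0) (hfg0 : ∀ᵐ ω ∂μ, f ω ≠ 0 ∧ g ω ≠ 0) :
    μ.real (errorRegion y f ∩ errorRegion y g) =
      (μ.real (errorRegion y f) + μ.real (errorRegion y g)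
        - μ.real (disagreementRegion f g)) / 2 := by
  rw [measureReal_congr (disagreementRegion_ae_eq_symmDiff hy0 hfg0)]
  exact measureReal_inter_eq_half_sub_symmDiff (measurableSet_errorRegion hy hf)
    (measurableSet_errorRegion hy hg)

lemma measureReal_add_mul_nonpos_le (hy : ∀ᵐ ω ∂μ, y ω ≠ 0)
    (hfg : ∀ᵐ ω ∂μ, f ω ≠ 0 ∧ g ω ≠ 0) :
    μ.real {ω | (f ω + g ω) * y ω ≤ 0} ≤
      μ.real (errorRegion y f ∩ errorRegion y g) +
        μ.real (disagreementRegion f g ∩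
          {ω | correctMargin y f g ω ≤ incorrectMargin y f g ω}) := by
  refine (ENNReal.toReal_mono (measure_ne_top μ _) (measure_mono_ae ?_)).trans
    (measureReal_union_le _ _)
  filter_upwards [hy, hfg] with ω hyω hfgω herr
  by_cases hω : ω ∈ disagreementRegion f g
  · exact .inr ⟨hω, correctMargin_le_incorrectMargin_of_add_mul_nonpos hyω hω herr⟩
  · exact .inl (mem_errorRegion_inter_of_add_mul_nonpos hyω hfgω.1 hfgω.2 hω herr)

theorem stmt14_general {φ : ℝ → ℝ} (hy : Measurable y) (hf : Measurable f) (hg : Measurable g)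
    (hy0 : ∀ᵐ ω ∂μ, y ω ≠ 0) (hfg0 : ∀ᵐ ω ∂μ, f ω ≠ 0 ∧ g ω ≠ 0)
    (hindep : correctMargin y f g ⟂ᵢ[μ[|disagreementRegion f g]] incorrectMargin y f g)
    (hφ : IntegrableOn (fun ω ↦ φ (incorrectMargin y f g ω)) (disagreementRegion f g) μ)
    (htsy : ∀ ω ∈ disagreementRegion f g,
      μ[|disagreementRegion f g].real {ω' | correctMargin y f g ω' ≤ incorrectMargin y f g ω} ≤
        φ (incorrectMargin y f g ω)) :
    μ.real {ω | (f ω + g ω) * y ω ≤ 0} ≤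
      (μ.real (errorRegion y f) + μ.real (errorRegion y g) - μ.real (disagreementRegion f g)) / 2
        + ∫ ω in disagreementRegion f g, φ (incorrectMargin y f g ω) ∂μ := by
  refine (measureReal_add_mul_nonpos_le hy0 hfg0).trans (add_le_add ?_ ?_)
  · exact (measureReal_errorRegion_inter hy hf hg hy0 hfg0).le
  · exact measureReal_inter_le_setIntegral_of_indepFun_cond (S := {p : ℝ × ℝ | p.1 ≤ p.2})
      (measurableSet_disagreementRegion hf hg) (measurable_correctMargin hy hf hg).aemeasurable
      (measurable_incorrectMargin hy hf hg).aemeasurable hindep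
      (measurableSet_le measurable_fst measurable_snd) hφ htsy

end Margins

/-- upper bound on the error of the margin combination. Under the
independence of the correct margin `G` and the incorrect margin `R` on the disagreed
region `DIS` and a Tsybakov-type small-margin condition on `G`, the combination error
is at most `(err₁ + err₂ − d)/2 + C·∫_DIS R^k dμ`. -/
theorem stmt14 {Ω : Type*} [MeasurableSpace Ω] (μ : Measure Ω) [IsProbabilityMeasure μ]
    (y f₁ f₂ : Ω → ℝ) (hy : Measurable y) (hf₁ : Measurable f₁) (hf₂ : Measurable f₂)
    (hy1 : ∀ ω, y ω = 1 ∨ y ω = -1)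
    (hb₁ : ∀ ω, |f₁ ω| ≤ 1) (hb₂ : ∀ ω, |f₂ ω| ≤ 1)
    (hne : ∀ᵐ ω ∂μ, f₁ ω ≠ 0 ∧ f₂ ω ≠ 0)
    (G R : Ω → ℝ)
    (hG : ∀ ω, G ω = if 0 < f₁ ω * y ω then |f₁ ω| else |f₂ ω|)
    (hR : ∀ ω, R ω = if 0 < f₁ ω * y ω then |f₂ ω| else |f₁ ω|)
    (C k : ℝ) (hC : 0 ≤ C) (hk : 0 ≤ k)
    (hDIS : 0 < μ {ω | f₁ ω * f₂ ω < 0})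
    (hindep : ProbabilityTheory.IndepFun G R (μ[|{ω | f₁ ω * f₂ ω < 0}]))
    (htsy : ∀ t ∈ Set.Ioc (0 : ℝ) 1,
      ((μ[|{ω | f₁ ω * f₂ ω < 0}]) {ω | G ω ≤ t}).toReal ≤ C * t ^ k) :
    (μ {ω | (f₁ ω + f₂ ω) * y ω ≤ 0}).toReal ≤
      ((μ {ω | f₁ ω * y ω < 0}).toReal + (μ {ω | f₂ ω * y ω < 0}).toReal
        - (μ {ω | f₁ ω * f₂ ω < 0}).toReal) / 2
      + C * ∫ ω in {ω | f₁ ω * f₂ ω < 0}, R ω ^ k ∂μ := by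
  obtain ⟨rfl, rfl⟩ : G = correctMargin y f₁ f₂ ∧ R = incorrectMargin y f₁ f₂ :=
    ⟨funext hG, funext hR⟩
  rw [← integral_const_mul]
  exact stmt14_general (φ := fun t ↦ C * t ^ k) hy hf₁ hf₂
    (ae_of_all μ fun ω ↦ by rcases hy1 ω with h | h <;> norm_num [h]) hne hindep
    ((integrableOn_incorrectMargin_rpow hy hf₁ hf₂ hk hb₁ hb₂).const_mul C)
    fun ω hω ↦ htsy _ (incorrectMargin_mem_Ioc hω (hb₁ ω) (hb₂ ω))
end

section
/- Let d ≥ 2, let B ⊆ EuclideanSpace ℝ (Fin d) be the closed unit ball centered at the origin, and let μ be the uniform probability measure on B (Lebesgue measure restricted to B and normalized). Then for all unit vectors w, w⋆: (i) μ{x : ⟪w, x⟫ · ⟪w⋆, x⟫ < 0} = Real.arccos ⟪w, w⋆⟫ / π; and (ii) for every x with ‖x‖ ≤ 1, |⟪w, x⟫ − ⟪w⋆, x⟫| ≤ π · μ{x' : ⟪w, x'⟫ · ⟪w⋆, x'⟫ < 0}. -/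
open MeasureTheory
open scoped RealInnerProductSpace

/-!
Project onto the plane spanned by `w` and `w⋆`. Reflections in lines of that plane generate its
rotations, so an isometry-invariant law projects to a rotation-invariant law on `ℂ`. Modulo `2π`,
the argument of a rotation-invariant random point has a translation-invariant law, hence is uniform
by uniqueness of Haar measure. The points on which the two classifiers disagree form two opposite
sectors, each of opening `angle w w⋆`. The margin bound then says that a chord of the unit sphere is
no longer than its arc.
-/

open Real Set ComplexConjugate InnerProductGeometry

theorem isOpen_setOf_pos_and_neg {X : Type*} [TopologicalSpace X] {f g : X → ℝ}
    (hf : Continuous f) (hg : Continuous g) : IsOpen {x | 0 < f x ∧ g x < 0} :=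
  (isOpen_lt continuous_const hf).and (isOpen_lt hg continuous_const)

section Argument

theorem cos_mul_re_add_sin_mul_im (θ : ℝ) (z : ℂ) :
    cos θ * z.re + sin θ * z.im = ‖z‖ * cos (z.arg - θ) := by
  rw [cos_sub]
  linear_combination
    -cos θ * Complex.norm_mul_cos_arg z - sin θ * Complex.norm_mul_sin_arg z

theorem arg_mem_Ioo_iff {θ : ℝ} (hθ₀ : 0 ≤ θ) (hθπ : θ ≤ π) {z : ℂ} (hz : z ≠ 0) :
    z.arg ∈ Ioo (-(π / 2)) (θ - π / 2) ↔ 0 < z.re ∧ cos θ * z.re + sin θ * z.im < 0 := by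
  have hre : 0 < z.re ↔ |z.arg| < π / 2 := by simp [Complex.abs_arg_lt_pi_div_two_iff, hz]
  rw [cos_mul_re_add_sin_mul_im, ← smul_eq_mul, smul_neg_iff_of_pos_left (norm_pos_iff.2 hz), hre,
    abs_lt, ← cos_neg, neg_sub]
  constructor
  · rintro ⟨hlo, hhi⟩
    exact ⟨⟨hlo, by linarith⟩, cos_neg_of_pi_div_two_lt_of_lt (by linarith) (by linarith)⟩
  · rintro ⟨⟨hlo, hhi⟩, hcos⟩
    refine ⟨hlo, ?_⟩
    by_contra! hge
    exact hcos.not_ge (cos_nonneg_of_mem_Icc ⟨by linarith, by linarith⟩)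

theorem coe_arg_circleExp_smul (t : ℝ) {z : ℂ} (hz : z ≠ 0) :
    ((Circle.exp t • z).arg : AddCircle (2 * π)) = t + z.arg := by
  have h := Complex.arg_mul_coe_angle (Circle.coe_ne_zero (Circle.exp t)) hz
  rwa [Circle.coe_exp, Complex.arg_exp_mul_I, Real.Angle.coe_toIocMod] at h

theorem measurable_coe_arg : Measurable fun z : ℂ ↦ (z.arg : AddCircle (2 * π)) :=
  AddCircle.measurable_mk'.comp Complex.measurable_arg

end Argument

section UniformArgument

theorem eq_haarAddCircle_of_isAddLeftInvariant {T : ℝ} [Fact (0 < T)]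
    (m : Measure (AddCircle T)) [IsProbabilityMeasure m] [m.IsAddLeftInvariant] :
    m = AddCircle.haarAddCircle := by
  have : m.IsAddHaarMeasure :=
    Measure.isAddHaarMeasure_of_isCompact_nonempty_interior m univ isCompact_univ
      (by simp) (by simp) (by simp)
  exact Measure.isAddHaarMeasure_eq_of_isProbabilityMeasure _ _

theorem measurePreserving_coe_equivIoc {T : ℝ} [hT : Fact (0 < T)] (a : ℝ) :
    MeasurePreserving (fun x : AddCircle T ↦ (AddCircle.equivIoc T a x : ℝ))
      AddCircle.haarAddCircle (ProbabilityTheory.cond volume (Ioc a (a + T))) := by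
  have hvol : MeasurePreserving (fun x : AddCircle T ↦ (AddCircle.equivIoc T a x : ℝ)) volume
      (volume.restrict (Ioc a (a + T))) :=
    (measurePreserving_subtype_coe measurableSet_Ioc).comp (AddCircle.measurePreserving_equivIoc T)
  have hT₀ : ENNReal.ofReal T ≠ 0 := by simpa using hT.out
  have hhaar : AddCircle.haarAddCircle =
      (ENNReal.ofReal T)⁻¹ • (volume : Measure (AddCircle T)) := by
    rw [AddCircle.volume_eq_smul_haarAddCircle, smul_smul,
      ENNReal.inv_mul_cancel hT₀ ENNReal.ofReal_ne_top, one_smul]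
  rw [hhaar, ProbabilityTheory.cond, Real.volume_Ioc, add_sub_cancel_left]
  exact hvol.smul_measure _

local instance fact_zero_lt_two_pi : Fact (0 < 2 * π) := ⟨two_pi_pos⟩

variable {ν : Measure ℂ} [IsProbabilityMeasure ν] [SMulInvariantMeasure Circle ℂ ν]

theorem map_coe_arg_eq_haarAddCircle (hν₀ : ∀ᵐ z ∂ν, z ≠ 0) :
    ν.map (fun z ↦ (z.arg : AddCircle (2 * π))) = AddCircle.haarAddCircle := by
  have := Measure.isProbabilityMeasure_map (μ := ν) measurable_coe_arg.aemeasurable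
  have : (ν.map fun z ↦ (z.arg : AddCircle (2 * π))).IsAddLeftInvariant := by
    refine ⟨fun α ↦ ?_⟩
    induction α using QuotientAddGroup.induction_on with | H t => ?_
    calc (ν.map fun z ↦ (z.arg : AddCircle (2 * π))).map ((t : AddCircle (2 * π)) + ·)
        = ν.map fun z ↦ (t : AddCircle (2 * π)) + z.arg :=
          Measure.map_map (by fun_prop) measurable_coe_arg
      _ = ν.map fun z ↦ ((Circle.exp t • z).arg : AddCircle (2 * π)) :=
          Measure.map_congr (hν₀.mono fun z hz ↦ (coe_arg_circleExp_smul t hz).symm)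
      _ = (ν.map (Circle.exp t • ·)).map fun z ↦ (z.arg : AddCircle (2 * π)) :=
          (Measure.map_map measurable_coe_arg (by fun_prop)).symm
      _ = ν.map fun z ↦ (z.arg : AddCircle (2 * π)) := by
          rw [(measurePreserving_smul (Circle.exp t) ν).map_eq]
  exact eq_haarAddCircle_of_isAddLeftInvariant _

theorem map_arg_eq_cond_volume (hν₀ : ∀ᵐ z ∂ν, z ≠ 0) :
    ν.map Complex.arg = ProbabilityTheory.cond volume (Ioc (-π) π) := by
  have hIoc : Ioc (-π) π = Ioc (-π) (-π + 2 * π) := by ring_nf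
  have hlift := measurePreserving_coe_equivIoc (T := 2 * π) (-π)
  have harg (z : ℂ) : (AddCircle.equivIoc (2 * π) (-π) z.arg : ℝ) = z.arg :=
    AddCircle.equivIoc_coe_of_mem (hIoc ▸ z.arg_mem_Ioc)
  rw [hIoc, ← hlift.map_eq, ← map_coe_arg_eq_haarAddCircle hν₀,
    Measure.map_map hlift.measurable measurable_coe_arg]
  exact congrArg ν.map (funext fun z ↦ (harg z).symm)

theorem measureReal_sector (hν₀ : ∀ᵐ z ∂ν, z ≠ 0) {θ : ℝ} (hθ₀ : 0 ≤ θ) (hθπ : θ ≤ π) :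
    ν.real {z | 0 < z.re ∧ cos θ * z.re + sin θ * z.im < 0} = θ / (2 * π) := by
  have hsub : Ioo (-(π / 2)) (θ - π / 2) ⊆ Ioc (-π) π :=
    fun t ht ↦ ⟨by linarith [ht.1, pi_pos], by linarith [ht.2]⟩
  calc ν.real {z | 0 < z.re ∧ cos θ * z.re + sin θ * z.im < 0}
      = (ν.map Complex.arg).real (Ioo (-(π / 2)) (θ - π / 2)) := by
        rw [map_measureReal_apply Complex.measurable_arg measurableSet_Ioo]
        exact measureReal_congr (hν₀.mono fun z hz ↦ propext (arg_mem_Ioo_iff hθ₀ hθπ hz).symm)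
    _ = θ / (2 * π) := by
        rw [map_arg_eq_cond_volume hν₀, measureReal_def,
          ProbabilityTheory.cond_apply measurableSet_Ioc, inter_eq_self_of_subset_right hsub]
        simp [hθ₀, pi_pos.le, div_eq_inv_mul, ← two_mul]

end UniformArgument

section InnerProductSpace

variable {E : Type*} [NormedAddCommGroup E] [InnerProductSpace ℝ E] {u v w : E}

theorem arccos_inner_eq_angle (hu : ‖u‖ = 1) (hw : ‖w‖ = 1) : arccos ⟪u, w⟫ = angle u w := by
  rw [angle, hu, hw, mul_one, div_one]

theorem norm_sub_le_angle (hu : ‖u‖ = 1) (hw : ‖w‖ = 1) : ‖u - w‖ ≤ angle u w := by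
  refine (sq_le_sq₀ (norm_nonneg _) (angle_nonneg u w)).1 ?_
  have hcos := one_sub_sq_div_two_le_cos (x := angle u w)
  rw [norm_sub_sq_real, hu, hw, inner_eq_cos_angle_of_norm_eq_one hu hw]
  linarith

theorem exists_orthogonal_eq_cos_smul_add_sin_smul (hu : ‖u‖ = 1) (hw : ‖w‖ = 1)
    (hsin : sin (angle u w) ≠ 0) :
    ∃ v : E, ‖v‖ = 1 ∧ ⟪u, v⟫ = 0 ∧ w = cos (angle u w) • u + sin (angle u w) • v := by
  have hinner := inner_eq_cos_angle_of_norm_eq_one hu hw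
  have hnorm : ‖w - cos (angle u w) • u‖ = sin (angle u w) := by
    refine (sq_eq_sq₀ (norm_nonneg _) (sin_angle_nonneg u w)).1 ?_
    rw [norm_sub_sq_real, norm_smul, inner_smul_right, real_inner_comm, hinner, hu, hw, sin_sq,
      mul_one, norm_eq_abs, sq_abs]
    ring
  refine ⟨(sin (angle u w))⁻¹ • (w - cos (angle u w) • u), ?_, ?_, ?_⟩
  · rw [norm_smul, hnorm, norm_inv, norm_of_nonneg (sin_angle_nonneg u w), inv_mul_cancel₀ hsin]
  · rw [inner_smul_right, inner_sub_right, inner_smul_right, hinner,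
      inner_self_eq_one_of_norm_eq_one hu, mul_one, sub_self, mul_zero]
  · rw [smul_inv_smul₀ hsin, add_sub_cancel]

/-- The orthogonal projection onto the plane spanned by an orthonormal pair `u`, `v`, with that
plane identified with `ℂ` by `u ↦ 1`, `v ↦ I`; it lets planar rotations act through `Circle`. -/
def planeCoord (u v x : E) : ℂ := ⟨⟪u, x⟫, ⟪v, x⟫⟩

theorem planeCoord_reflection (hu : ‖u‖ = 1) (hv : ‖v‖ = 1) (huv : ⟪u, v⟫ = 0) (t : ℝ) (x : E) :
    planeCoord u v ((ℝ ∙ (cos t • u + sin t • v)).reflection x) =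
      Circle.exp (2 * t) • conj (planeCoord u v x) := by
  have huu : ⟪u, u⟫ = 1 := inner_self_eq_one_of_norm_eq_one hu
  have hvv : ⟪v, v⟫ = 1 := inner_self_eq_one_of_norm_eq_one hv
  have hvu : ⟪v, u⟫ = 0 := by rw [real_inner_comm, huv]
  have hunit : ‖cos t • u + sin t • v‖ ^ 2 = 1 := by
    rw [norm_add_sq_real, norm_smul, norm_smul, real_inner_smul_left, real_inner_smul_right, huv,
      hu, hv]
    simp
  have hrefl : (ℝ ∙ (cos t • u + sin t • v)).reflection x =
      (2 * (cos t * ⟪u, x⟫ + sin t * ⟪v, x⟫)) • (cos t • u + sin t • v) - x := by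
    rw [Submodule.reflection_singleton_apply, RCLike.ofReal_real_eq_id, id, hunit, div_one,
      inner_add_left, real_inner_smul_left, real_inner_smul_left, mul_smul, ofNat_smul_eq_nsmul ℝ]
  rw [hrefl, Circle.smul_def, Circle.coe_exp, smul_eq_mul]
  apply Complex.ext
  · rw [Complex.mul_re, Complex.exp_ofReal_mul_I_re, Complex.exp_ofReal_mul_I_im, cos_two_mul,
      sin_two_mul]
    simp only [planeCoord, Complex.conj_re, Complex.conj_im, inner_sub_right, inner_add_right,
      real_inner_smul_right, huu, huv]
    ring
  · rw [Complex.mul_im, Complex.exp_ofReal_mul_I_re, Complex.exp_ofReal_mul_I_im, cos_two_mul',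
      sin_two_mul]
    simp only [planeCoord, Complex.conj_re, Complex.conj_im, inner_sub_right, inner_add_right,
      real_inner_smul_right, hvv, hvu]
    linear_combination ⟪v, x⟫ * cos_sq_add_sin_sq t

theorem exists_planeCoord_eq_circle_smul (hu : ‖u‖ = 1) (hv : ‖v‖ = 1) (huv : ⟪u, v⟫ = 0)
    (c : Circle) : ∃ e : E ≃ₗᵢ[ℝ] E, ∀ x, planeCoord u v (e x) = c • planeCoord u v x := by
  obtain ⟨t, rfl⟩ : ∃ t, Circle.exp (2 * t) = c :=
    ⟨(c : ℂ).arg / 2, by rw [mul_div_cancel₀ _ two_ne_zero, Circle.exp_arg]⟩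
  have hconj (x : E) : planeCoord u v ((ℝ ∙ u).reflection x) = conj (planeCoord u v x) := by
    simpa using planeCoord_reflection hu hv huv 0 x
  refine ⟨(ℝ ∙ u).reflection.trans (ℝ ∙ (cos t • u + sin t • v)).reflection, fun x ↦ ?_⟩
  rw [LinearIsometryEquiv.trans_apply, planeCoord_reflection hu hv huv, hconj, Complex.conj_conj]

section Invariant

variable [MeasurableSpace E] [OpensMeasurableSpace E] {μ : Measure E}

theorem measurable_planeCoord (u v : E) : Measurable (planeCoord u v) :=
  (Complex.equivRealProdCLM.symm.continuous.comp
    (by fun_prop : Continuous fun x : E ↦ (⟪u, x⟫, ⟪v, x⟫))).measurable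

theorem smulInvariantMeasure_map_planeCoord (hμ : ∀ e : E ≃ₗᵢ[ℝ] E, MeasurePreserving e μ μ)
    (hu : ‖u‖ = 1) (hv : ‖v‖ = 1) (huv : ⟪u, v⟫ = 0) :
    SMulInvariantMeasure Circle ℂ (μ.map (planeCoord u v)) := by
  have hmeas := measurable_planeCoord u v
  refine ⟨fun c s hs ↦ ?_⟩
  obtain ⟨e, he⟩ := exists_planeCoord_eq_circle_smul hu hv huv c
  rw [Measure.map_apply hmeas hs, Measure.map_apply hmeas (hs.preimage (by fun_prop)),
    ← (hμ e).measure_preimage (hmeas hs).nullMeasurableSet]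
  simp only [preimage_preimage, he]

variable [IsProbabilityMeasure μ]

theorem measureReal_inner_pos_inner_neg (hμ : ∀ e : E ≃ₗᵢ[ℝ] E, MeasurePreserving e μ μ)
    (hu : ‖u‖ = 1) (hw : ‖w‖ = 1) (hu₀ : ∀ᵐ x ∂μ, ⟪u, x⟫ ≠ 0) (hsin : sin (angle u w) ≠ 0) :
    μ.real {x | 0 < ⟪u, x⟫ ∧ ⟪w, x⟫ < 0} = angle u w / (2 * π) := by
  obtain ⟨v, hv, huv, hwv⟩ := exists_orthogonal_eq_cos_smul_add_sin_smul hu hw hsin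
  have hmeas := measurable_planeCoord u v
  have := smulInvariantMeasure_map_planeCoord hμ hu hv huv
  have := Measure.isProbabilityMeasure_map (μ := μ) hmeas.aemeasurable
  have hne : ∀ᵐ z ∂μ.map (planeCoord u v), z ≠ 0 :=
    (ae_map_iff hmeas.aemeasurable (measurableSet_singleton 0).compl).2
      (hu₀.mono fun x hx hzero ↦ hx (congrArg Complex.re hzero))
  have hinner (x : E) : ⟪w, x⟫ = cos (angle u w) * ⟪u, x⟫ + sin (angle u w) * ⟪v, x⟫ := by
    conv_lhs => rw [hwv, inner_add_left, real_inner_smul_left, real_inner_smul_left]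
  have hsector : MeasurableSet
      {z : ℂ | 0 < z.re ∧ cos (angle u w) * z.re + sin (angle u w) * z.im < 0} :=
    (isOpen_setOf_pos_and_neg (by fun_prop) (by fun_prop)).measurableSet
  rw [← measureReal_sector hne (angle_nonneg u w) (angle_le_pi u w),
    map_measureReal_apply hmeas hsector]
  simp [planeCoord, hinner]

theorem measureReal_inner_mul_inner_neg (hμ : ∀ e : E ≃ₗᵢ[ℝ] E, MeasurePreserving e μ μ)
    (hu : ‖u‖ = 1) (hw : ‖w‖ = 1) (hu₀ : ∀ᵐ x ∂μ, ⟪u, x⟫ ≠ 0) :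
    μ.real {x | ⟪u, x⟫ * ⟪w, x⟫ < 0} = angle u w / π := by
  by_cases hsin : sin (angle u w) = 0
  · have hinner := inner_eq_cos_angle_of_norm_eq_one hu hw
    rcases sin_eq_zero_iff_angle_eq_zero_or_angle_eq_pi.1 hsin with hangle | hangle <;>
      rw [hangle] at hinner ⊢
    · obtain rfl : u = w := (inner_eq_one_iff_of_norm_eq_one hu hw).1 (by rw [hinner, cos_zero])
      simp [(mul_self_nonneg _).not_gt]
    · obtain rfl : u = -w := (inner_eq_neg_one_iff_of_norm_eq_one hu hw).1 (by rw [hinner, cos_pi])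
      have huniv : {x | ⟪-w, x⟫ * ⟪w, x⟫ < 0} =ᵐ[μ] univ := by
        refine Filter.eventuallyEq_univ.2 (hu₀.mono fun x hx ↦ ?_)
        simpa [inner_neg_left, mul_self_pos] using hx
      rw [measureReal_congr huniv, probReal_univ, div_self pi_ne_zero]
  · have hmeas : MeasurableSet {x : E | 0 < ⟪u, x⟫ ∧ ⟪w, x⟫ < 0} :=
      (isOpen_setOf_pos_and_neg (by fun_prop) (by fun_prop)).measurableSet
    have hneg : μ.real {x | ⟪u, x⟫ < 0 ∧ 0 < ⟪w, x⟫} = μ.real {x | 0 < ⟪u, x⟫ ∧ ⟪w, x⟫ < 0} := by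
      rw [← (hμ (.neg ℝ)).measureReal_preimage hmeas.nullMeasurableSet]
      simp
    have hdisj : Disjoint {x : E | 0 < ⟪u, x⟫ ∧ ⟪w, x⟫ < 0} {x | ⟪u, x⟫ < 0 ∧ 0 < ⟪w, x⟫} :=
      disjoint_left.2 fun x hpos hneg ↦ hpos.1.not_gt hneg.1
    simp only [mul_neg_iff, ofPred_or]
    rw [measureReal_union' hdisj hmeas, hneg, measureReal_inner_pos_inner_neg hμ hu hw hu₀ hsin]
    field

theorem stmt17_general (hμ : ∀ e : E ≃ₗᵢ[ℝ] E, MeasurePreserving e μ μ)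
    (hu : ‖u‖ = 1) (hw : ‖w‖ = 1) (hu₀ : ∀ᵐ x ∂μ, ⟪u, x⟫ ≠ 0) :
    μ.real {x | ⟪u, x⟫ * ⟪w, x⟫ < 0} = arccos ⟪u, w⟫ / π ∧
      ∀ x : E, ‖x‖ ≤ 1 → |⟪u, x⟫ - ⟪w, x⟫| ≤ π * μ.real {x' | ⟪u, x'⟫ * ⟪w, x'⟫ < 0} := by
  rw [arccos_inner_eq_angle hu hw, measureReal_inner_mul_inner_neg hμ hu hw hu₀]
  refine ⟨rfl, fun x hx ↦ ?_⟩
  calc |⟪u, x⟫ - ⟪w, x⟫| = |⟪u - w, x⟫| := by rw [inner_sub_left]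
    _ ≤ ‖u - w‖ * ‖x‖ := abs_real_inner_le_norm _ _
    _ ≤ ‖u - w‖ := mul_le_of_le_one_right (norm_nonneg _) hx
    _ ≤ angle u w := norm_sub_le_angle hu hw
    _ = π * (angle u w / π) := (mul_div_cancel₀ _ pi_ne_zero).symm

end Invariant

section UniformBall

variable [MeasurableSpace E] [BorelSpace E] [FiniteDimensional ℝ E]

theorem ae_inner_ne_zero (μ : Measure E) [μ.IsAddHaarMeasure] (hu : u ≠ 0) :
    ∀ᵐ x ∂μ, ⟪u, x⟫ ≠ 0 := by
  have hker : (innerₛₗ ℝ u).ker ≠ ⊤ := fun htop ↦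
    hu (inner_self_eq_zero.1 (LinearMap.congr_fun (LinearMap.ker_eq_top.1 htop) u))
  simp only [ae_iff, not_not]
  exact Measure.addHaar_submodule μ _ hker

theorem measurePreserving_cond_closedBall (r : ℝ) (e : E ≃ₗᵢ[ℝ] E) :
    MeasurePreserving e (ProbabilityTheory.cond volume (Metric.closedBall (0 : E) r))
      (ProbabilityTheory.cond volume (Metric.closedBall (0 : E) r)) := by
  have h := e.measurePreserving.restrict_preimage
    (Metric.isClosed_closedBall (x := (0 : E)) (ε := r)).measurableSet
  rw [e.preimage_closedBall, map_zero] at h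
  exact h.smul_measure _

end UniformBall

end InnerProductSpace

/-- for the uniform distribution `μ` on the unit ball of `ℝ^d` (`d ≥ 2`)
and unit vectors `w`, `w⋆`: (i) the disagreement between the linear classifiers
`sign⟪w,·⟫` and `sign⟪w⋆,·⟫` equals `arccos⟪w,w⋆⟫ / π`; (ii) the margin Lipschitz
condition `|⟪w,x⟫ − ⟪w⋆,x⟫| ≤ π · disagreement` holds on the ball. -/
theorem stmt17 (d : ℕ) (hd : 2 ≤ d)
    (μ : Measure (EuclideanSpace ℝ (Fin d)))
    (hμ : μ = (volume (Metric.closedBall (0 : EuclideanSpace ℝ (Fin d)) 1))⁻¹ •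
      volume.restrict (Metric.closedBall (0 : EuclideanSpace ℝ (Fin d)) 1))
    (w ws : EuclideanSpace ℝ (Fin d)) (hw : ‖w‖ = 1) (hws : ‖ws‖ = 1) :
    (μ {x | ⟪w, x⟫ * ⟪ws, x⟫ < 0}).toReal = Real.arccos ⟪w, ws⟫ / Real.pi
    ∧ ∀ x : EuclideanSpace ℝ (Fin d), ‖x‖ ≤ 1 →
        |⟪w, x⟫ - ⟪ws, x⟫| ≤ Real.pi * (μ {x' | ⟪w, x'⟫ * ⟪ws, x'⟫ < 0}).toReal := by
  have : IsProbabilityMeasure μ := hμ ▸ ProbabilityTheory.cond_isProbabilityMeasure_of_finite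
    (Metric.measure_closedBall_pos _ _ one_pos).ne' measure_closedBall_lt_top.ne
  have hw₀ : ∀ᵐ x ∂volume, ⟪w, x⟫ ≠ 0 :=
    ae_inner_ne_zero volume (norm_ne_zero_iff.1 (by simp [hw]))
  exact stmt17_general (hμ ▸ measurePreserving_cond_closedBall 1) hw hws
    (hμ ▸ Measure.ae_smul_measure (ae_restrict_of_ae hw₀) _)
end
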